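/- In the same setting (d ≥ 3, Σ positive definite with unit diagonal and smallest eigenvalue σ_*², φ > 0, ε ∈ (0,1], v ≥ 1, K > 0, η = K/√(log d)), sup over rectangles A and w ∈ ℝ^d of Σ_{j_1,…,j_v=1}^d sup_{‖y‖_∞ ≤ ε σ_* η} |∂_{j_1…j_v} ρ^{A,φ,ε,Σ}(w + y)| ≤ C (log d)^{v/2} / (ε σ_*)^v, where C depends only on v and K. -/

import Mathlib

open MeasureTheory ProbabilityTheory

/-- The piecewise-linear smoothing function g^φ. -/
noncomputable def gphi (φ t : ℝ) : ℝ :=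
  if t ≤ 0 then 1 else if t < 1 / φ then 1 - φ * t else 0

/-- The φ-Lipschitz smoothed indicator of the rectangle ∏ (a_j, b_j]. -/
noncomputable def mrect (d : ℕ) (a b : Fin d → ℝ) (φ : ℝ) (w : Fin d → ℝ) : ℝ :=
  gphi φ (⨆ j, max (w j - b j) (a j - w j))

/-- ρ^{A,φ,ε,Σ}(w) = E[m^{A,φ}(w + εZ)], Z ∼ N(0,Σ) with law γ. -/
noncomputable def rhoFn (d : ℕ) (a b : Fin d → ℝ) (φ ε : ℝ)
    (γ : Measure (Fin d → ℝ)) (w : Fin d → ℝ) : ℝ :=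
  ∫ z, mrect d a b φ (w + ε • z) ∂γ

/-!
The smallest eigenvalue of `Σ` is `σ²`, so `Σ - σ² I` is positive semidefinite and `Z` splits as
`σ N + Z'` with `N` standard normal and independent of `Z'`. By the layer-cake formula `mrect` is
the average over `u ∈ [0, 1]` of the indicators of the rectangles enlarged by `u / φ`. Hence `ρ(w)`
is a mixture of products `∏ j, P(x j + N j ∈ [α j, β j])` evaluated at `x = w / (ε σ)`, and it
remains to bound the `n`-th derivatives of such a mixture by a multiple of `l ^ n`, where
`l = √(log d)`.

Let `r j` be the probability that `x j + N j` leaves `[α j, β j]` enlarged by the window radius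
`K / l`. The undifferentiated factors are at most `1 - r j ≤ exp (-r j)` on the whole window. Since
the `m`-th derivative of the normal CDF at `t` is of order `l ^ m` times a Gaussian tail for
`|t| ≲ l` and of order `exp (-l²) = 1 / d` otherwise, a factor differentiated `m ≥ 1` times is at
most `(A l) ^ m exp (-r j) (r j + 2 / d)`. Summing the product of these bounds over all
`J : Fin n → Fin d` leaves `(A l) ^ n exp (-R) (R + n + 2) ^ n` with `R = ∑ j, r j`, and this is
bounded by `(A l) ^ n n! exp (n + 2)`, independently of `d`.
-/

open scoped ContDiff

section GaussianDecomposition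
variable {ι : Type*} [Fintype ι]

theorem exists_eq_map_smul_stdGaussian_conv {μ : Measure (EuclideanSpace ℝ ι)} [IsGaussian μ]
    {σ : ℝ} (hσ : ∀ x, σ ^ 2 * ‖x‖ ^ 2 ≤ covarianceBilin μ x x) :
    ∃ ν : Measure (EuclideanSpace ℝ ι), IsProbabilityMeasure ν ∧
      μ = (stdGaussian (EuclideanSpace ℝ ι)).map (fun x => σ • x) ∗ ν := by
  classical
  let B : LinearMap.BilinForm ℝ (EuclideanSpace ℝ ι) :=
    (covarianceBilin μ).toBilinForm - σ ^ 2 • innerₗ (EuclideanSpace ℝ ι)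
  have hB (x) : B x x = covarianceBilin μ x x - σ ^ 2 * ‖x‖ ^ 2 := by
    simp [B]
  have hB_comm (x y) : B x y = B y x := by
    simp [B, covarianceBilin_comm x y, real_inner_comm x y]
  let b := (EuclideanSpace.basisFun ι ℝ).toBasis
  let T := LinearMap.toMatrix₂ b b B
  have hT (x : ι → ℝ) : x ⬝ᵥ T.mulVec x = B (.toLp 2 x) (.toLp 2 x) :=
    (apply_eq_dotProduct_toMatrix₂_mulVec b b B (.toLp 2 x) (.toLp 2 x)).symm
  have hT_pos : T.PosSemidef := by
    refine .of_dotProduct_mulVec_nonneg (.ext fun i j => ?_) fun x => ?_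
    · simp only [T, LinearMap.toMatrix₂_apply, star_trivial, hB_comm (b j)]
    · rw [star_trivial, hT, hB]
      exact sub_nonneg.2 (hσ _)
  refine ⟨multivariateGaussian (∫ x, x ∂μ) T, inferInstance, Measure.ext_of_charFun ?_⟩
  ext t
  rw [charFun_conv, charFun_map_smul, charFun_stdGaussian, charFun_multivariateGaussian hT_pos,
    IsGaussian.charFun_eq', ← Complex.exp_add, hT, hB, norm_smul, ← Complex.ofReal_pow, mul_pow,
    Real.norm_eq_abs, sq_abs, WithLp.toLp_ofLp]
  congr 1
  simp only [id_eq]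
  push_cast
  ring

theorem exists_eq_map_smul_pi_gaussianReal_conv {γ : Measure (ι → ℝ)} [IsGaussian γ] {σ : ℝ}
    (hσ : ∀ x : ι → ℝ, σ ^ 2 * ∑ j, x j ^ 2 ≤ Var[fun z => x ⬝ᵥ z; γ]) :
    ∃ ν : Measure (ι → ℝ), IsProbabilityMeasure ν ∧
      γ = (Measure.pi fun _ => gaussianReal 0 1).map (fun z => σ • z) ∗ ν := by
  let e := EuclideanSpace.equiv ι ℝ
  have hσ_toLp (x : EuclideanSpace ℝ ι) :
      σ ^ 2 * ‖x‖ ^ 2 ≤ covarianceBilin (γ.map e.symm) x x := by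
    rw [covarianceBilin_self IsGaussian.memLp_two_id, variance_map (by fun_prop) (by fun_prop),
      EuclideanSpace.real_norm_sq_eq]
    convert hσ x using 2
    ext z
    simp [e, PiLp.inner_apply, dotProduct, mul_comm]
  obtain ⟨ν, hν, hγ⟩ := exists_eq_map_smul_stdGaussian_conv hσ_toLp
  refine ⟨ν.map e, Measure.isProbabilityMeasure_map (by fun_prop), ?_⟩
  calc γ = (γ.map e.symm).map e := by
        rw [Measure.map_map (by fun_prop) (by fun_prop), e.self_comp_symm, Measure.map_id]
    _ = ((stdGaussian (EuclideanSpace ℝ ι)).map (fun x => σ • x)).map e ∗ ν.map e := by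
        rw [hγ]
        exact Measure.map_conv_continuousLinearMap (e : EuclideanSpace ℝ ι →L[ℝ] ι → ℝ)
    _ = _ := by
        rw [← map_pi_eq_stdGaussian, Measure.map_map (by fun_prop) (by fun_prop),
          Measure.map_map (by fun_prop) (by fun_prop)]
        rfl
end GaussianDecomposition

theorem integral_eval_eq_zero {ι : Type*} {γ : Measure (ι → ℝ)}
    (hγ : ∀ l : (ι → ℝ) →ₗ[ℝ] ℝ, ∃ v : NNReal, γ.map l = gaussianReal 0 v) (j : ι) :
    ∫ z, z j ∂γ = 0 := by
  obtain ⟨v, hv⟩ := hγ (.proj j)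
  calc ∫ z, z j ∂γ = ∫ x, x ∂(γ.map (LinearMap.proj (R := ℝ) j : (ι → ℝ) →ₗ[ℝ] ℝ)) := by
        exact (integral_map (φ := fun z : ι → ℝ => z j) (f := id)
          (measurable_pi_apply j).aemeasurable aestronglyMeasurable_id).symm
    _ = 0 := by rw [hv, integral_id_gaussianReal]

theorem isGaussian_of_map_eq_gaussianReal_zero {ι : Type*} [Finite ι] {γ : Measure (ι → ℝ)}
    (hγ : ∀ l : (ι → ℝ) →ₗ[ℝ] ℝ, ∃ v : NNReal, γ.map l = gaussianReal 0 v) : IsGaussian γ :=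
  isGaussian_of_map_eq_gaussianReal fun L => ⟨0, hγ L.toLinearMap⟩

section Variance
variable {ι : Type*} [Fintype ι]

theorem variance_dotProduct {S : ι → ι → ℝ} {γ : Measure (ι → ℝ)} [IsGaussian γ]
    (hγ : ∀ j, ∫ z, z j ∂γ = 0) (hS : ∀ j k, ∫ z, z j * z k ∂γ = S j k) (x : ι → ℝ) :
    Var[fun z => x ⬝ᵥ z; γ] = ∑ j, ∑ k, x j * S j k * x k := by
  have hL (j) : MemLp (fun z : ι → ℝ => z j) 2 γ :=
    IsGaussian.memLp_dual γ (.proj j) 2 (by simp)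
  have hxL (j) : MemLp (fun z : ι → ℝ => x j * z j) 2 γ := (hL j).const_mul (x j)
  simp only [dotProduct]
  rw [← covariance_self (Finset.aemeasurable_fun_sum _ fun j _ => (hxL j).aemeasurable),
    covariance_fun_sum_fun_sum hxL hxL]
  congr! 2 with j _ k _
  rw [covariance_const_mul_left, covariance_const_mul_right, covariance_eq_sub (hL j) (hL k)]
  simp only [Pi.mul_apply, hγ, hS]
  ring

theorem mul_sum_sq_le_of_mem_lowerBounds {S : ι → ι → ℝ} {c : ℝ}
    (hc : c ∈ lowerBounds {r | ∃ x : ι → ℝ, ∑ j, x j ^ 2 = 1 ∧ r = ∑ j, ∑ k, x j * S j k * x k})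
    (x : ι → ℝ) : c * ∑ j, x j ^ 2 ≤ ∑ j, ∑ k, x j * S j k * x k := by
  obtain hx | hx := (Finset.sum_nonneg fun j _ => sq_nonneg (x j) : 0 ≤ ∑ j, x j ^ 2).eq_or_lt
  · have hx_zero (j) : x j = 0 := by
      simpa using (Finset.sum_eq_zero_iff_of_nonneg fun j _ => sq_nonneg (x j)).1 hx.symm j
    simp [hx_zero]
  · set q := ∑ j, x j ^ 2
    have hnorm : ∑ j, (x j / √q) ^ 2 = 1 := by
      simp only [div_pow, Real.sq_sqrt hx.le, ← Finset.sum_div]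
      exact div_self hx.ne'
    calc c * q ≤ (∑ j, ∑ k, x j / √q * S j k * (x k / √q)) * q := by
          gcongr
          exact hc ⟨_, hnorm, rfl⟩
      _ = _ := by
          simp only [Finset.sum_mul]
          congr! 2 with j _ k _
          field_simp
          rw [Real.sq_sqrt hx.le]
          ring
end Variance

/-- The standard normal distribution function, as a real function. -/
noncomputable def stdNormalCDF (t : ℝ) : ℝ := cdf (gaussianReal 0 1) t

namespace stdNormalCDF

theorem nonneg (t : ℝ) : 0 ≤ stdNormalCDF t := cdf_nonneg _ _

theorem le_one (t : ℝ) : stdNormalCDF t ≤ 1 := cdf_le_one _ _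

theorem monotone : Monotone stdNormalCDF := monotone_cdf _

theorem neg (t : ℝ) : stdNormalCDF (-t) = 1 - stdNormalCDF t := by
  have := nullSingletonClass_gaussianReal (μ := 0) one_ne_zero
  simp only [stdNormalCDF, cdf_eq_real]
  calc (gaussianReal 0 1).real (Set.Iic (-t))
      = ((gaussianReal 0 1).map fun x => -x).real (Set.Iic (-t)) := by
        rw [gaussianReal_map_neg, neg_zero]
    _ = (gaussianReal 0 1).real (Set.Ici t) := by
        rw [map_measureReal_apply (by fun_prop) measurableSet_Iic]
        congr 1
        ext
        simp
    _ = (gaussianReal 0 1).real (Set.Iic t)ᶜ := by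
        rw [Set.compl_Iic, measureReal_congr Ioi_ae_eq_Ici]
    _ = _ := probReal_compl_eq_one_sub measurableSet_Iic

theorem hasDerivAt (t : ℝ) : HasDerivAt stdNormalCDF (gaussianPDFReal 0 1 t) t := by
  have hint : Integrable (gaussianPDFReal 0 1) := integrable_gaussianPDFReal 0 1
  have hcont : Continuous (gaussianPDFReal 0 1) := by
    unfold gaussianPDFReal
    fun_prop
  have heq : stdNormalCDF = fun x => ∫ u in Set.Iic x, gaussianPDFReal 0 1 u := by
    ext x
    rw [stdNormalCDF, cdf_eq_real, Measure.real, gaussianReal_apply_eq_integral 0 (by simp),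
      ENNReal.toReal_ofReal (setIntegral_nonneg measurableSet_Iic
        fun u _ => gaussianPDFReal_nonneg _ _ _)]
  have heq' : stdNormalCDF =
      fun x => stdNormalCDF 0 + ∫ u in (0 : ℝ)..x, gaussianPDFReal 0 1 u := by
    ext x
    rw [← intervalIntegral.integral_Iic_sub_Iic hint.integrableOn hint.integrableOn, heq]
    ring
  rw [heq']
  exact (intervalIntegral.integral_hasDerivAt_right (hcont.intervalIntegrable _ _)
    (hcont.stronglyMeasurableAtFilter _ _) hcont.continuousAt).const_add _

theorem deriv_eq : deriv stdNormalCDF = fun t => (√(2 * Real.pi))⁻¹ * Real.exp (-(t ^ 2 / 2)) := by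
  ext t
  rw [(hasDerivAt t).deriv, gaussianPDFReal_def]
  simp [neg_div]

theorem contDiff : ContDiff ℝ ∞ stdNormalCDF := by
  refine contDiff_infty_iff_deriv.2 ⟨fun t => (hasDerivAt t).differentiableAt, ?_⟩
  rw [deriv_eq]
  fun_prop

theorem iteratedDeriv_succ_eq (k : ℕ) (t : ℝ) :
    iteratedDeriv (k + 1) stdNormalCDF t = (√(2 * Real.pi))⁻¹ *
      ((-1) ^ k * Polynomial.aeval t (Polynomial.hermite k) * Real.exp (-(t ^ 2 / 2))) := by
  rw [iteratedDeriv_succ', deriv_eq, iteratedDeriv_const_mul_field, iteratedDeriv_eq_iterate,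
    Polynomial.deriv_gaussian_eq_hermite_mul_gaussian]

end stdNormalCDF

theorem exists_abs_aeval_le_mul_pow (p : Polynomial ℤ) :
    ∃ C, 0 ≤ C ∧ ∀ t : ℝ, |Polynomial.aeval t p| ≤ C * (1 + |t|) ^ p.natDegree := by
  refine ⟨∑ i ∈ Finset.range (p.natDegree + 1), |(p.coeff i : ℝ)|,
    Finset.sum_nonneg fun _ _ => abs_nonneg _, fun t => ?_⟩
  rw [Polynomial.aeval_eq_sum_range, Finset.sum_mul]
  refine (Finset.abs_sum_le_sum_abs _ _).trans (Finset.sum_le_sum fun i hi => ?_)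
  rw [zsmul_eq_mul, abs_mul, abs_pow]
  gcongr
  calc |t| ^ i ≤ (1 + |t|) ^ i := by gcongr; linarith
    _ ≤ (1 + |t|) ^ p.natDegree :=
      pow_le_pow_right₀ (by linarith [abs_nonneg t]) (Finset.mem_range_succ_iff.1 hi)

theorem one_add_abs_pow_mul_exp_neg_sq_le (k : ℕ) (t : ℝ) :
    (1 + |t|) ^ k * Real.exp (-(t ^ 2 / 2)) ≤
      k.factorial * Real.exp 2 * Real.exp (-(t ^ 2 / 4)) := by
  have hpow : (1 + |t|) ^ k ≤ Real.exp (1 + |t|) * k.factorial :=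
    (div_le_iff₀ (by positivity)).1 (Real.pow_div_factorial_le_exp (1 + |t|) (by positivity) k)
  calc (1 + |t|) ^ k * Real.exp (-(t ^ 2 / 2))
      ≤ Real.exp (1 + |t|) * k.factorial * Real.exp (-(t ^ 2 / 2)) := by gcongr
    _ = k.factorial * Real.exp (1 + |t| + -(t ^ 2 / 2)) := by rw [Real.exp_add _ (-_)]; ring
    _ ≤ k.factorial * Real.exp (2 + -(t ^ 2 / 4)) := by
        gcongr ?_ * Real.exp ?_
        linarith [sq_nonneg (|t| - 2), sq_abs t]
    _ = _ := by rw [Real.exp_add]; ring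

theorem stdNormalCDF.exists_abs_iteratedDeriv_succ_le (k : ℕ) :
    ∃ C, 0 ≤ C ∧ ∀ t, |iteratedDeriv (k + 1) stdNormalCDF t| ≤
      C * ((1 + |t|) ^ k * Real.exp (-(t ^ 2 / 2))) := by
  obtain ⟨C, hC, h⟩ := exists_abs_aeval_le_mul_pow (Polynomial.hermite k)
  rw [Polynomial.natDegree_hermite] at h
  refine ⟨(√(2 * Real.pi))⁻¹ * C, by positivity, fun t => ?_⟩
  rw [iteratedDeriv_succ_eq]
  simp only [abs_mul, abs_pow, abs_neg, abs_one, one_pow, one_mul, Real.abs_exp, abs_inv,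
    abs_of_nonneg (Real.sqrt_nonneg _)]
  calc _ ≤ (√(2 * Real.pi))⁻¹ * (C * (1 + |t|) ^ k * Real.exp (-(t ^ 2 / 2))) := by
        gcongr
        exact h t
    _ = _ := by ring

theorem stdNormalCDF.exists_abs_iteratedDeriv_le (m : ℕ) :
    ∃ C, ∀ t, |iteratedDeriv m stdNormalCDF t| ≤ C := by
  cases m with
  | zero =>
    refine ⟨1, fun t => ?_⟩
    rw [iteratedDeriv_zero, abs_of_nonneg (nonneg t)]
    exact le_one t
  | succ k =>
    obtain ⟨C, hC, h⟩ := exists_abs_iteratedDeriv_succ_le k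
    refine ⟨C * (k.factorial * Real.exp 2), fun t => (h t).trans ?_⟩
    refine mul_le_mul_of_nonneg_left ((one_add_abs_pow_mul_exp_neg_sq_le k t).trans ?_) hC
    refine mul_le_of_le_one_right (by positivity) (Real.exp_le_one_iff.2 ?_)
    linarith [sq_nonneg t]

theorem exp_neg_sq_le_of_abs_sub_le {l M t ξ : ℝ} (hl : 1 ≤ l) (ht : |t| ≤ 2 * l)
    (hξ : |ξ - t| ≤ M / l) :
    Real.exp (-(t ^ 2 / 2)) ≤ Real.exp ((4 * M + M ^ 2) / 2) * Real.exp (-(ξ ^ 2 / 2)) := by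
  have hl0 : 0 < l := by linarith
  have hM : 0 ≤ M := by
    by_contra! h
    exact absurd (hξ.trans_lt (div_neg_of_neg_of_pos h hl0)) (abs_nonneg _).not_gt
  have hξM : |ξ - t| ≤ M := hξ.trans (div_le_self hM hl)
  have hcross : 2 * t * (ξ - t) ≤ 4 * M :=
    calc 2 * t * (ξ - t) ≤ 2 * |t| * |ξ - t| := by
          rw [mul_assoc, mul_assoc, ← abs_mul]
          gcongr
          exact le_abs_self _
      _ ≤ 2 * (2 * l) * (M / l) := by gcongr
      _ = 4 * M := by field_simp; ring
  have hsq : (ξ - t) ^ 2 ≤ M ^ 2 := sq_le_sq.2 (by rwa [abs_of_nonneg hM])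
  rw [← Real.exp_add, Real.exp_le_exp]
  linarith [show ξ ^ 2 = t ^ 2 + 2 * t * (ξ - t) + (ξ - t) ^ 2 by ring]

theorem stdNormalCDF.exists_mem_Ioo_exp_neg_sq_le (t : ℝ) {h : ℝ} (hh : 0 < h) :
    ∃ ξ ∈ Set.Ioo (t - h) t,
      Real.exp (-(ξ ^ 2 / 2)) ≤ √(2 * Real.pi) * (stdNormalCDF t / h) := by
  obtain ⟨ξ, hξ, hslope⟩ := exists_deriv_eq_slope stdNormalCDF (sub_lt_self t hh)
    contDiff.continuous.continuousOn (contDiff.differentiable (by simp)).differentiableOn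
  refine ⟨ξ, hξ, (inv_mul_le_iff₀ (by positivity)).1 ?_⟩
  simp only [deriv_eq, sub_sub_cancel] at hslope
  rw [hslope]
  gcongr
  exact sub_le_self _ (nonneg _)

theorem stdNormalCDF.exists_one_add_abs_pow_mul_exp_neg_sq_le (M : ℝ) (k : ℕ) :
    ∃ C, 0 ≤ C ∧ ∀ l, 1 ≤ l → ∀ t t', |t - t'| ≤ M / l →
      (1 + |t|) ^ k * Real.exp (-(t ^ 2 / 2)) ≤
        C * l ^ (k + 1) * (stdNormalCDF t' + Real.exp (-l ^ 2)) := by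
  set D := Real.exp ((4 * (M + 1) + (M + 1) ^ 2) / 2)
  set c := √(2 * Real.pi)
  refine ⟨k.factorial * Real.exp 2 + 3 ^ k * (D * c), by positivity, fun l hl t t' htt' => ?_⟩
  have hl0 : 0 < l := by linarith
  have hΦ := nonneg t'
  rcases le_or_gt (2 * l) |t| with ht | ht
  · have hlt : l ^ 2 ≤ t ^ 2 / 4 := by
      rw [← sq_abs t]
      nlinarith
    calc (1 + |t|) ^ k * Real.exp (-(t ^ 2 / 2))
        ≤ k.factorial * Real.exp 2 * Real.exp (-(t ^ 2 / 4)) :=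
          one_add_abs_pow_mul_exp_neg_sq_le k t
      _ ≤ k.factorial * Real.exp 2 * 1 * (0 + Real.exp (-l ^ 2)) := by
          rw [mul_one, zero_add]
          gcongr
      _ ≤ _ := by
          gcongr
          · exact le_add_of_nonneg_right (by positivity)
          · exact one_le_pow₀ hl
  -- For `|t| < 2 * l` the density varies by a bounded factor over a distance of order `1 / l`, so a
  -- mean value point of the CDF on an interval of length `1 / l` can replace `t`.
  · obtain ⟨ξ, ⟨hξ₁, hξ₂⟩, hξ⟩ := exists_mem_Ioo_exp_neg_sq_le t' (one_div_pos.2 hl0)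
    have hξt : |ξ - t| ≤ (M + 1) / l := by
      rw [add_div]
      rw [abs_le] at htt' ⊢
      constructor <;> linarith
    calc (1 + |t|) ^ k * Real.exp (-(t ^ 2 / 2))
        ≤ (3 * l) ^ k * (D * Real.exp (-(ξ ^ 2 / 2))) := by
          gcongr
          · linarith
          · exact exp_neg_sq_le_of_abs_sub_le hl ht.le hξt
      _ ≤ (3 * l) ^ k * (D * (c * (stdNormalCDF t' / (1 / l)))) := by gcongr
      _ = 3 ^ k * (D * c) * l ^ (k + 1) * (stdNormalCDF t' + 0) := by
          field_simp
          ring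
      _ ≤ _ := by
          gcongr
          · exact le_add_of_nonneg_left (by positivity)
          · positivity

theorem stdNormalCDF.exists_abs_iteratedDeriv_succ_le_min (M : ℝ) (k : ℕ) :
    ∃ C, 0 ≤ C ∧ ∀ l, 1 ≤ l → ∀ t t', |t - t'| ≤ M / l →
      |iteratedDeriv (k + 1) stdNormalCDF t| ≤ C * l ^ (k + 1) *
        (min (stdNormalCDF t') (1 - stdNormalCDF t') + Real.exp (-l ^ 2)) := by
  obtain ⟨B, hB, hderiv⟩ := exists_abs_iteratedDeriv_succ_le k
  obtain ⟨C, hC, henv⟩ := exists_one_add_abs_pow_mul_exp_neg_sq_le M k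
  refine ⟨B * C, by positivity, fun l hl t t' htt' => ?_⟩
  have hlower := henv l hl t t' htt'
  have hupper := henv l hl (-t) (-t') (by rwa [neg_sub_neg, abs_sub_comm])
  rw [abs_neg, neg_sq, neg] at hupper
  calc |iteratedDeriv (k + 1) stdNormalCDF t|
      ≤ B * ((1 + |t|) ^ k * Real.exp (-(t ^ 2 / 2))) := hderiv t
    _ ≤ B * (C * l ^ (k + 1) *
        (min (stdNormalCDF t') (1 - stdNormalCDF t') + Real.exp (-l ^ 2))) := by
        refine mul_le_mul_of_nonneg_left ?_ hB
        rcases min_choice (stdNormalCDF t') (1 - stdNormalCDF t') with h | h <;> rwa [h]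
    _ = _ := by ring

/-- The probability `P(α ≤ x + N ≤ β)` for a standard normal `N` and `α ≤ β`, as a function of the
shift `x`. -/
noncomputable def shiftedNormalProb (α β x : ℝ) : ℝ := stdNormalCDF (β - x) - stdNormalCDF (α - x)

/-- The probability that `x + N` leaves the interval `[α - η, β + η]`, for `N` standard normal. -/
noncomputable def exitProb (η α β x : ℝ) : ℝ := 1 - shiftedNormalProb (α - η) (β + η) x

theorem shiftedNormalProb_nonneg {α β : ℝ} (h : α ≤ β) (x : ℝ) : 0 ≤ shiftedNormalProb α β x :=
  sub_nonneg.2 (stdNormalCDF.monotone (by linarith))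

theorem abs_shiftedNormalProb_le_one (α β x : ℝ) : |shiftedNormalProb α β x| ≤ 1 :=
  abs_sub_le_of_nonneg_of_le (stdNormalCDF.nonneg _) (stdNormalCDF.le_one _)
    (stdNormalCDF.nonneg _) (stdNormalCDF.le_one _)

theorem contDiff_shiftedNormalProb (α β : ℝ) : ContDiff ℝ ∞ (shiftedNormalProb α β) :=
  (stdNormalCDF.contDiff.comp (contDiff_const.sub contDiff_id)).sub
    (stdNormalCDF.contDiff.comp (contDiff_const.sub contDiff_id))

theorem iteratedDeriv_shiftedNormalProb (m : ℕ) (α β x : ℝ) :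
    iteratedDeriv m (shiftedNormalProb α β) x =
      (-1) ^ m * (iteratedDeriv m stdNormalCDF (β - x) - iteratedDeriv m stdNormalCDF (α - x)) := by
  have hsmooth (c : ℝ) : ContDiffAt ℝ m (fun y => stdNormalCDF (c - y)) x :=
    ((stdNormalCDF.contDiff.comp (contDiff_const.sub contDiff_id)).of_le
      (by exact_mod_cast le_top)).contDiffAt
  unfold shiftedNormalProb
  rw [iteratedDeriv_fun_sub (hsmooth β) (hsmooth α), iteratedDeriv_comp_const_sub,
    iteratedDeriv_comp_const_sub]
  simp only [smul_eq_mul]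
  ring

theorem exists_abs_iteratedDeriv_shiftedNormalProb_le (m : ℕ) :
    ∃ C, ∀ α β x, |iteratedDeriv m (shiftedNormalProb α β) x| ≤ C := by
  obtain ⟨C, hC⟩ := stdNormalCDF.exists_abs_iteratedDeriv_le m
  refine ⟨C + C, fun α β x => ?_⟩
  rw [iteratedDeriv_shiftedNormalProb, abs_mul, abs_pow, abs_neg, abs_one, one_pow, one_mul]
  exact (abs_sub _ _).trans (add_le_add (hC _) (hC _))

theorem exitProb_nonneg (η α β x : ℝ) : 0 ≤ exitProb η α β x :=
  sub_nonneg.2 (le_of_abs_le (abs_shiftedNormalProb_le_one ..))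

theorem exitProb_le_one {η α β : ℝ} (hη : 0 ≤ η) (hαβ : α ≤ β) (x : ℝ) : exitProb η α β x ≤ 1 :=
  sub_le_self _ (shiftedNormalProb_nonneg (by linarith) x)

theorem shiftedNormalProb_add_le {η y : ℝ} (hy : |y| ≤ η) (α β x : ℝ) :
    shiftedNormalProb α β (x + y) ≤ 1 - exitProb η α β x := by
  obtain ⟨hy₁, hy₂⟩ := abs_le.1 hy
  rw [exitProb, sub_sub_cancel]
  exact sub_le_sub (stdNormalCDF.monotone (by linarith)) (stdNormalCDF.monotone (by linarith))

theorem exists_abs_iteratedDeriv_succ_shiftedNormalProb_le (K : ℝ) (k : ℕ) :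
    ∃ C, 0 ≤ C ∧ ∀ l, 1 ≤ l → ∀ α β x y, |y| ≤ K / l →
      |iteratedDeriv (k + 1) (shiftedNormalProb α β) (x + y)| ≤
        C * l ^ (k + 1) * (exitProb (K / l) α β x + 2 * Real.exp (-l ^ 2)) := by
  obtain ⟨C, hC, h⟩ := stdNormalCDF.exists_abs_iteratedDeriv_succ_le_min (2 * K) k
  refine ⟨C, hC, fun l hl α β x y hy => ?_⟩
  have : 0 < l := by linarith
  obtain ⟨hy₁, hy₂⟩ := abs_le.1 hy
  have hη : 2 * K / l = K / l + K / l := by ring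
  set η := K / l
  have hβ := h l hl (β - (x + y)) (β + η - x) (abs_le.2 ⟨by linarith, by linarith⟩)
  have hα := h l hl (α - (x + y)) (α - η - x) (abs_le.2 ⟨by linarith, by linarith⟩)
  rw [iteratedDeriv_shiftedNormalProb, abs_mul, abs_pow, abs_neg, abs_one, one_pow, one_mul]
  calc _ ≤ C * l ^ (k + 1) * (1 - stdNormalCDF (β + η - x) + Real.exp (-l ^ 2)) +
        C * l ^ (k + 1) * (stdNormalCDF (α - η - x) + Real.exp (-l ^ 2)) := by
        refine (abs_sub _ _).trans (add_le_add (hβ.trans ?_) (hα.trans ?_))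
        · gcongr
          exact min_le_right _ _
        · gcongr
          exact min_le_left _ _
    _ = _ := by
        rw [exitProb, shiftedNormalProb]
        ring

theorem abs_iteratedDeriv_zero_shiftedNormalProb_le {η α β x y : ℝ} (hαβ : α ≤ β) (hy : |y| ≤ η) :
    |iteratedDeriv 0 (shiftedNormalProb α β) (x + y)| ≤ Real.exp (-exitProb η α β x) := by
  rw [iteratedDeriv_zero, abs_of_nonneg (shiftedNormalProb_nonneg hαβ _)]
  linarith [shiftedNormalProb_add_le hy α β x, Real.add_one_le_exp (-exitProb η α β x)]

theorem exists_abs_iteratedDeriv_shiftedNormalProb_le_mul_exp {K : ℝ} (hK : 0 ≤ K) (n : ℕ) :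
    ∃ A, 0 ≤ A ∧ ∀ l, 1 ≤ l → ∀ α β x y, α ≤ β → |y| ≤ K / l → ∀ m ≤ n,
      |iteratedDeriv m (shiftedNormalProb α β) (x + y)| ≤
        (A * l) ^ m * Real.exp (-exitProb (K / l) α β x) *
          if m = 0 then 1 else exitProb (K / l) α β x + 2 * Real.exp (-l ^ 2) := by
  choose C hC h using exists_abs_iteratedDeriv_succ_shiftedNormalProb_le K
  set A := 1 + ∑ k ∈ Finset.range n, C k * Real.exp 1
  have hsum_nonneg : 0 ≤ ∑ k ∈ Finset.range n, C k * Real.exp 1 :=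
    Finset.sum_nonneg fun k _ => mul_nonneg (hC k) (Real.exp_pos 1).le
  have hA : 1 ≤ A := le_add_of_nonneg_right hsum_nonneg
  refine ⟨A, by linarith, fun l hl α β x y hαβ hy m hm => ?_⟩
  obtain _ | k := m
  · simpa using abs_iteratedDeriv_zero_shiftedNormalProb_le hαβ hy
  set r := exitProb (K / l) α β x
  have hr_nonneg : 0 ≤ r := exitProb_nonneg ..
  have hr_le_one : r ≤ 1 := exitProb_le_one (by positivity) hαβ x
  have hCA : C k * Real.exp 1 ≤ A ^ (k + 1) :=
    calc C k * Real.exp 1 ≤ ∑ k ∈ Finset.range n, C k * Real.exp 1 :=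
          Finset.single_le_sum (f := fun k => C k * Real.exp 1)
            (fun k _ => mul_nonneg (hC k) (Real.exp_pos 1).le) (Finset.mem_range.2 hm)
      _ ≤ A := le_add_of_nonneg_left zero_le_one
      _ ≤ A ^ (k + 1) := le_self_pow₀ hA k.succ_ne_zero
  rw [if_neg k.succ_ne_zero]
  calc _ ≤ C k * l ^ (k + 1) * (r + 2 * Real.exp (-l ^ 2)) := h k l hl α β x y hy
    _ = C k * 1 * l ^ (k + 1) * (r + 2 * Real.exp (-l ^ 2)) := by rw [mul_one]
    _ ≤ C k * Real.exp (1 - r) * l ^ (k + 1) * (r + 2 * Real.exp (-l ^ 2)) := by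
        have := hC k
        gcongr
        exact Real.one_le_exp (by linarith)
    _ = C k * Real.exp 1 * l ^ (k + 1) * Real.exp (-r) * (r + 2 * Real.exp (-l ^ 2)) := by
        rw [sub_eq_add_neg, Real.exp_add]
        ring
    _ ≤ A ^ (k + 1) * l ^ (k + 1) * Real.exp (-r) * (r + 2 * Real.exp (-l ^ 2)) := by gcongr
    _ = _ := by rw [mul_pow]

section PartialDerivFamily
variable {ι : Type*} [Fintype ι] [DecidableEq ι] {F : (ι → ℕ) → (ι → ℝ) → ℝ}

/-- A family of functions on `ι → ℝ` indexed by multi-indices `k`, in which `F (k + e_j)` is the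
`j`-th partial derivative of `F k`. -/
def IsPartialDerivFamily (F : (ι → ℕ) → (ι → ℝ) → ℝ) : Prop :=
  ∀ k x, HasFDerivAt (F k)
    (∑ j, F (k + Pi.single j 1) x • (.proj j : (ι → ℝ) →L[ℝ] ℝ)) x

namespace IsPartialDerivFamily

theorem contDiff (hF : IsPartialDerivFamily F) (n : ℕ) (k : ι → ℕ) : ContDiff ℝ n (F k) := by
  induction n generalizing k with
  | zero =>
    exact contDiff_zero.2 (continuous_iff_continuousAt.2 fun x => (hF k x).continuousAt)
  | succ n ih =>
    push_cast
    exact contDiff_succ_iff_hasFDerivAt.2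
      ⟨_, .sum fun j _ => (ih _).smul contDiff_const, hF k⟩

theorem iteratedFDeriv_apply_single (hF : IsPartialDerivFamily F) (n : ℕ) (k : ι → ℕ) (x : ι → ℝ)
    (J : Fin n → ι) :
    iteratedFDeriv ℝ n (F k) x (fun i => Pi.single (J i) 1) =
      F (k + ∑ i, Pi.single (J i) 1) x := by
  induction n generalizing k x with
  | zero => simp
  | succ n ih =>
    have hdiff : DifferentiableAt ℝ (iteratedFDeriv ℝ n (F k)) x :=
      (hF.contDiff (n + 1) k).differentiable_iteratedFDeriv (by exact_mod_cast n.lt_succ_self) x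
    have htail : (fun y => iteratedFDeriv ℝ n (F k) y
        (Fin.tail (α := fun _ => ι → ℝ) fun i => Pi.single (J i) 1)) =
          F (k + ∑ i : Fin n, Pi.single (J i.succ) 1) :=
      funext fun y => ih k y fun i => J i.succ
    rw [hdiff.iteratedFDeriv_succ_apply_left', htail, (hF _ x).fderiv]
    simp [Pi.single_apply, Fin.sum_univ_succ, add_right_comm, add_assoc]

end IsPartialDerivFamily
end PartialDerivFamily

section Mixture
variable {ι Ω : Type*} [Fintype ι] [DecidableEq ι] [MeasurableSpace Ω] {π : Measure Ω}
  {f : Ω → ι → ℝ → ℝ}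

theorem hasFDerivAt_prod_iteratedDeriv {g : ι → ℝ → ℝ} (hg : ∀ j, ContDiff ℝ ∞ (g j)) (k : ι → ℕ)
    (w : ι → ℝ) :
    HasFDerivAt (fun w : ι → ℝ => ∏ j, iteratedDeriv (k j) (g j) (w j))
      (∑ i, (∏ j, iteratedDeriv ((k + Pi.single i 1 : ι → ℕ) j) (g j) (w j)) •
        (.proj i : (ι → ℝ) →L[ℝ] ℝ)) w := by
  have hfactor (j) : HasFDerivAt (fun w : ι → ℝ => iteratedDeriv (k j) (g j) (w j))
      (iteratedDeriv (k j + 1) (g j) (w j) • (.proj j : (ι → ℝ) →L[ℝ] ℝ)) w := by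
    rw [iteratedDeriv_succ]
    have hdiff : Differentiable ℝ (iteratedDeriv (k j) (g j)) :=
      (hg j).differentiable_iteratedDeriv (k j) (by exact_mod_cast WithTop.coe_lt_top _)
    exact (hdiff (w j)).hasDerivAt.comp_hasFDerivAt (f := fun w : ι → ℝ => w j) w
      (hasFDerivAt_apply j w)
  refine (HasFDerivAt.finsetProd fun j _ => hfactor j).congr_fderiv ?_
  refine Finset.sum_congr rfl fun i _ => ?_
  rw [smul_smul, ← Finset.mul_prod_erase _ _ (Finset.mem_univ i)]
  congr 1
  rw [mul_comm]
  congr 1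
  · simp
  · refine Finset.prod_congr rfl fun j hj => ?_
    simp [Finset.ne_of_mem_erase hj]

theorem isPartialDerivFamily_integral_prod_iteratedDeriv [IsFiniteMeasure π]
    (hf : ∀ θ j, ContDiff ℝ ∞ (f θ j))
    (hmeas : ∀ m j x, AEStronglyMeasurable (fun θ => iteratedDeriv m (f θ j) x) π)
    (hbdd : ∀ m, ∃ C, ∀ θ j x, |iteratedDeriv m (f θ j) x| ≤ C) :
    IsPartialDerivFamily fun k w => ∫ θ, ∏ j, iteratedDeriv (k j) (f θ j) (w j) ∂π := by
  choose C hC using hbdd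
  have hprod (k : ι → ℕ) (θ) (w : ι → ℝ) :
      ‖∏ j, iteratedDeriv (k j) (f θ j) (w j)‖ ≤ ∏ j, C (k j) := by
    rw [norm_prod]
    exact Finset.prod_le_prod (fun _ _ => norm_nonneg _) fun j _ => hC _ θ j _
  have hprod_meas (k : ι → ℕ) (w : ι → ℝ) :
      AEStronglyMeasurable (fun θ => ∏ j, iteratedDeriv (k j) (f θ j) (w j)) π :=
    Finset.aestronglyMeasurable_fun_prod _ fun j _ => hmeas _ j _
  have hint (k : ι → ℕ) (w : ι → ℝ) :
      Integrable (fun θ => ∏ j, iteratedDeriv (k j) (f θ j) (w j)) π :=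
    .of_bound (hprod_meas k w) _ (.of_forall fun θ => hprod k θ w)
  let F' (k : ι → ℕ) (w : ι → ℝ) (θ : Ω) : (ι → ℝ) →L[ℝ] ℝ :=
    ∑ i, (∏ j, iteratedDeriv ((k + Pi.single i 1 : ι → ℕ) j) (f θ j) (w j)) • .proj i
  intro k w
  have hF' : HasFDerivAt (fun w => ∫ θ, ∏ j, iteratedDeriv (k j) (f θ j) (w j) ∂π)
      (∫ θ, F' k w θ ∂π) w := by
    refine hasFDerivAt_integral_of_dominated_of_fderiv_le (F' := F' k) Filter.univ_mem
      (bound := fun _ => ∑ i, (∏ j, C ((k + Pi.single i 1 : ι → ℕ) j)) *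
        ‖(.proj i : (ι → ℝ) →L[ℝ] ℝ)‖)
      (.of_forall fun w => hprod_meas k w) (hint k w) ?_ (.of_forall fun θ w _ => ?_)
      (integrable_const _) (.of_forall fun θ w _ => hasFDerivAt_prod_iteratedDeriv (hf θ) k w)
    · exact Finset.aestronglyMeasurable_fun_sum _ fun i _ => (hprod_meas _ w).smul_const _
    · refine (norm_sum_le _ _).trans (Finset.sum_le_sum fun i _ => ?_)
      rw [norm_smul]
      gcongr
      exact hprod _ θ w
  refine hF'.congr_fderiv ?_
  rw [integral_finsetSum _ fun i _ => (hint _ w).smul_const _]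
  exact Finset.sum_congr rfl fun i _ => integral_smul_const _ _
end Mixture

section Combinatorics
variable {ι : Type*} [DecidableEq ι] {n : ℕ}

theorem prod_insert_le_mul_indicator_add {x : ι → ℝ} (hx : ∀ j, 0 ≤ x j) (I : Finset ι) (i : ι) :
    ∏ j ∈ insert i I, x j ≤ (∏ j ∈ I, x j) * ((if i ∈ I then 1 else 0) + x i) := by
  have hI : 0 ≤ ∏ j ∈ I, x j := Finset.prod_nonneg fun j _ => hx j
  by_cases h : i ∈ I
  · rw [Finset.insert_eq_of_mem h, if_pos h]
    exact le_mul_of_one_le_right hI (le_add_of_nonneg_right (hx i))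
  · rw [Finset.prod_insert h, if_neg h, zero_add, mul_comm]

theorem sum_prod_image_le_pow [Fintype ι] {x : ι → ℝ} (hx : ∀ j, 0 ≤ x j) (n : ℕ) :
    ∑ J : Fin n → ι, ∏ j ∈ Finset.univ.image J, x j ≤ (n + ∑ j, x j) ^ n := by
  have hsum : 0 ≤ ∑ j, x j := Finset.sum_nonneg fun j _ => hx j
  induction n with
  | zero => simp
  | succ n ih =>
    have hcons (i : ι) (J : Fin n → ι) :
        Finset.univ.image (Fin.cons i J : Fin (n + 1) → ι) = insert i (Finset.univ.image J) := by
      ext j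
      simp [Fin.exists_fin_succ, eq_comm]
    have hhead (J : Fin n → ι) :
        ∑ i, ∏ j ∈ insert i (Finset.univ.image J), x j ≤
          (∏ j ∈ Finset.univ.image J, x j) * (n + ∑ j, x j) := by
      have hJ : 0 ≤ ∏ j ∈ Finset.univ.image J, x j := Finset.prod_nonneg fun j _ => hx j
      refine (Finset.sum_le_sum fun i _ => prod_insert_le_mul_indicator_add hx _ i).trans ?_
      rw [← Finset.mul_sum, Finset.sum_add_distrib, Finset.sum_boole, Finset.filter_univ_mem]
      gcongr
      exact Finset.card_image_le.trans (by simp)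
    calc ∑ J : Fin (n + 1) → ι, ∏ j ∈ Finset.univ.image J, x j
        = ∑ J : Fin n → ι, ∑ i, ∏ j ∈ insert i (Finset.univ.image J), x j := by
          rw [← (Fin.consEquiv fun _ => ι).sum_comp, Fintype.sum_prod_type_right]
          simp only [← hcons]
          rfl
      _ ≤ ∑ J : Fin n → ι, (∏ j ∈ Finset.univ.image J, x j) * (n + ∑ j, x j) :=
          Finset.sum_le_sum fun J _ => hhead J
      _ ≤ (n + ∑ j, x j) ^ n * (n + ∑ j, x j) := by
          rw [← Finset.sum_mul]
          gcongr
      _ ≤ ((n + 1 : ℕ) + ∑ j, x j) ^ (n + 1) := by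
          rw [← pow_succ]
          gcongr
          simp

theorem sum_single_apply_le (J : Fin n → ι) (j : ι) :
    (∑ i, Pi.single (J i) 1 : ι → ℕ) j ≤ n := by
  rw [Finset.sum_apply]
  refine (Finset.sum_le_card_nsmul _ _ 1 fun i _ => ?_).trans (by simp)
  rw [Pi.single_apply]
  split_ifs <;> simp

theorem prod_pow_mul_exp_mul_ite_sum_single [Fintype ι] (B : ℝ) (r x : ι → ℝ) (J : Fin n → ι) :
    ∏ j, B ^ (∑ i, Pi.single (J i) 1 : ι → ℕ) j * Real.exp (-r j) *
        (if (∑ i, Pi.single (J i) 1 : ι → ℕ) j = 0 then 1 else x j) =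
      B ^ n * Real.exp (-∑ j, r j) * ∏ j ∈ Finset.univ.image J, x j := by
  have hdeg : ∑ j, (∑ i, Pi.single (J i) 1 : ι → ℕ) j = n := by
    simp only [Finset.sum_apply]
    rw [Finset.sum_comm]
    simp
  have hzero (j : ι) :
      (∑ i, Pi.single (J i) 1 : ι → ℕ) j = 0 ↔ j ∉ Finset.univ.image J := by
    simp only [Finset.sum_apply, Finset.sum_eq_zero_iff, Pi.single_apply]
    simp [eq_comm]
  simp only [hzero, ite_not]
  rw [Finset.prod_mul_distrib, Finset.prod_mul_distrib, Finset.prod_pow_eq_pow_sum, hdeg,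
    ← Real.exp_sum, Finset.sum_neg_distrib, Finset.prod_ite_mem, Finset.univ_inter]

theorem sum_exp_neg_mul_prod_image_le [Fintype ι] {r : ι → ℝ} (hr : ∀ j, 0 ≤ r j) {δ : ℝ}
    (hδ : 0 ≤ δ) (hcard : Fintype.card ι * δ ≤ 1) (n : ℕ) :
    ∑ J : Fin n → ι, Real.exp (-∑ j, r j) * ∏ j ∈ Finset.univ.image J, (r j + 2 * δ) ≤
      n.factorial * Real.exp (n + 2) := by
  set R := ∑ j, r j
  have hR : 0 ≤ R := Finset.sum_nonneg fun j _ => hr j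
  have hsum : ∑ j, (r j + 2 * δ) ≤ R + 2 := by
    rw [Finset.sum_add_distrib, Finset.sum_const, Finset.card_univ, nsmul_eq_mul]
    linarith
  have hsum_nonneg : 0 ≤ ∑ j, (r j + 2 * δ) :=
    Finset.sum_nonneg fun j _ => add_nonneg (hr j) (by positivity)
  calc ∑ J : Fin n → ι, Real.exp (-R) * ∏ j ∈ Finset.univ.image J, (r j + 2 * δ)
      ≤ Real.exp (-R) * (n + ∑ j, (r j + 2 * δ)) ^ n := by
        rw [← Finset.mul_sum]
        gcongr
        exact sum_prod_image_le_pow (fun j => add_nonneg (hr j) (by positivity)) n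
    _ ≤ Real.exp (-R) * (n + (R + 2)) ^ n := by gcongr
    _ ≤ Real.exp (-R) * (Real.exp (n + (R + 2)) * n.factorial) := by
        gcongr
        exact (div_le_iff₀ (by positivity)).1
          (Real.pow_div_factorial_le_exp _ (by positivity) n)
    _ = n.factorial * Real.exp (n + 2) := by
        rw [← mul_assoc, ← Real.exp_add, mul_comm]
        congr 2
        ring
end Combinatorics

/-- The mixture over `π` of the probabilities that a standard normal vector shifted by `w` lies in
the random rectangle `∏ j, [α θ j, β θ j]`. -/
noncomputable def normalProbMixture {ι Ω : Type*} [Fintype ι] [MeasurableSpace Ω]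
    (π : Measure Ω) (α β : Ω → ι → ℝ) (w : ι → ℝ) : ℝ :=
  ∫ θ, ∏ j, shiftedNormalProb (α θ j) (β θ j) (w j) ∂π

section NormalProbMixture
variable {ι Ω : Type*} [MeasurableSpace Ω]

theorem measurable_iteratedDeriv_shiftedNormalProb {α β : Ω → ℝ} (hα : Measurable α)
    (hβ : Measurable β) (m : ℕ) (x : ℝ) :
    Measurable fun θ => iteratedDeriv m (shiftedNormalProb (α θ) (β θ)) x := by
  have hΦ : Measurable (iteratedDeriv m stdNormalCDF) :=
    (stdNormalCDF.contDiff.continuous_iteratedDeriv m (by exact_mod_cast le_top)).measurable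
  simp only [iteratedDeriv_shiftedNormalProb]
  fun_prop

theorem measurable_exitProb {α β : Ω → ℝ} (hα : Measurable α) (hβ : Measurable β) (η x : ℝ) :
    Measurable fun θ => exitProb η (α θ) (β θ) x := by
  have hΦ : Measurable stdNormalCDF := stdNormalCDF.monotone.measurable
  unfold exitProb shiftedNormalProb
  fun_prop

variable [Fintype ι]

theorem isPartialDerivFamily_integral_prod_iteratedDeriv_shiftedNormalProb [DecidableEq ι]
    {π : Measure Ω} [IsFiniteMeasure π] {α β : Ω → ι → ℝ} (hα : Measurable α) (hβ : Measurable β) :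
    IsPartialDerivFamily fun (k : ι → ℕ) w =>
      ∫ θ, ∏ j, iteratedDeriv (k j) (shiftedNormalProb (α θ j) (β θ j)) (w j) ∂π := by
  refine isPartialDerivFamily_integral_prod_iteratedDeriv
    (fun _ _ => contDiff_shiftedNormalProb _ _) (fun m j x => ?_) fun m => ?_
  · exact (measurable_iteratedDeriv_shiftedNormalProb (by fun_prop) (by fun_prop) m
      x).aestronglyMeasurable
  · obtain ⟨C, hC⟩ := exists_abs_iteratedDeriv_shiftedNormalProb_le m
    exact ⟨C, fun _ _ => hC _ _⟩

theorem contDiff_normalProbMixture {π : Measure Ω} [IsFiniteMeasure π] {α β : Ω → ι → ℝ}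
    (hα : Measurable α) (hβ : Measurable β) (n : ℕ) :
    ContDiff ℝ n (normalProbMixture π α β) := by
  classical
  exact (isPartialDerivFamily_integral_prod_iteratedDeriv_shiftedNormalProb hα hβ).contDiff n 0

theorem iteratedFDeriv_normalProbMixture_apply_single [DecidableEq ι] {π : Measure Ω}
    [IsFiniteMeasure π] {α β : Ω → ι → ℝ} (hα : Measurable α) (hβ : Measurable β) {n : ℕ}
    (w : ι → ℝ) (J : Fin n → ι) :
    iteratedFDeriv ℝ n (normalProbMixture π α β) w (fun i => Pi.single (J i) 1) =
      ∫ θ, ∏ j, iteratedDeriv ((∑ i, Pi.single (J i) 1 : ι → ℕ) j)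
        (shiftedNormalProb (α θ j) (β θ j)) (w j) ∂π := by
  have heval := (isPartialDerivFamily_integral_prod_iteratedDeriv_shiftedNormalProb (π := π)
    hα hβ).iteratedFDeriv_apply_single n 0 w J
  simp only [zero_add, Pi.zero_apply, iteratedDeriv_zero] at heval
  exact heval
end NormalProbMixture

section SumIntegral
variable {Ω κ : Type*} [MeasurableSpace Ω] [Fintype κ] {π : Measure Ω} {h : κ → Ω → ℝ} {c : ℝ}

theorem integrable_of_sum_le [IsFiniteMeasure π] (hmeas : ∀ i, Measurable (h i))
    (hnonneg : ∀ i θ, 0 ≤ h i θ) (hsum : ∀ θ, ∑ i, h i θ ≤ c) (i : κ) : Integrable (h i) π := by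
  refine .of_bound (hmeas i).aestronglyMeasurable c (.of_forall fun θ => ?_)
  rw [Real.norm_of_nonneg (hnonneg i θ)]
  exact (Finset.single_le_sum (f := fun i => h i θ) (fun i _ => hnonneg i θ)
    (Finset.mem_univ i)).trans (hsum θ)

theorem sum_integral_le_of_sum_le [IsProbabilityMeasure π] (hmeas : ∀ i, Measurable (h i))
    (hnonneg : ∀ i θ, 0 ≤ h i θ) (hsum : ∀ θ, ∑ i, h i θ ≤ c) : ∑ i, ∫ θ, h i θ ∂π ≤ c := by
  have hint (i) : Integrable (h i) π := integrable_of_sum_le hmeas hnonneg hsum i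
  calc ∑ i, ∫ θ, h i θ ∂π = ∫ θ, ∑ i, h i θ ∂π := (integral_finsetSum _ fun i _ => hint i).symm
    _ ≤ ∫ _, c ∂π := integral_mono (integrable_finsetSum _ fun i _ => hint i)
        (integrable_const c) hsum
    _ = c := by simp
end SumIntegral

section Majorant
universe u₁ u₂

theorem exists_abs_prod_iteratedDeriv_shiftedNormalProb_le {K : ℝ} (hK : 0 ≤ K) (n : ℕ) :
    ∃ A, 0 ≤ A ∧ ∀ (ι : Type u₁) [Fintype ι] [DecidableEq ι] (l : ℝ), 1 ≤ l →
      ∀ α β x y : ι → ℝ, (∀ j, α j ≤ β j) → ‖y‖ ≤ K / l → ∀ J : Fin n → ι,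
        |∏ j, iteratedDeriv ((∑ i, Pi.single (J i) 1 : ι → ℕ) j)
            (shiftedNormalProb (α j) (β j)) ((x + y) j)| ≤
          (A * l) ^ n * (Real.exp (-∑ j, exitProb (K / l) (α j) (β j) (x j)) *
            ∏ j ∈ Finset.univ.image J,
              (exitProb (K / l) (α j) (β j) (x j) + 2 * Real.exp (-l ^ 2))) := by
  obtain ⟨A, hA, hfactor⟩ := exists_abs_iteratedDeriv_shiftedNormalProb_le_mul_exp hK n
  refine ⟨A, hA, fun ι _ _ l hl α β x y hαβ hy J => ?_⟩
  rw [← mul_assoc, ← prod_pow_mul_exp_mul_ite_sum_single, Finset.abs_prod]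
  exact Finset.prod_le_prod (fun _ _ => abs_nonneg _) fun j _ =>
    hfactor l hl _ _ _ _ (hαβ j) ((norm_le_pi_norm y j).trans hy) _ (sum_single_apply_le J j)

theorem exists_majorant_iteratedFDeriv_normalProbMixture {K : ℝ} (hK : 0 ≤ K) (n : ℕ) :
    ∃ C, ∀ (ι : Type u₁) [Fintype ι] [DecidableEq ι] (Ω : Type u₂) [MeasurableSpace Ω]
      (π : Measure Ω) [IsProbabilityMeasure π] (l : ℝ), 1 ≤ l →
      Fintype.card ι * Real.exp (-l ^ 2) ≤ 1 →
      ∀ α β : Ω → ι → ℝ, Measurable α → Measurable β → (∀ θ j, α θ j ≤ β θ j) → ∀ w,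
        ∃ H : (Fin n → ι) → ℝ, ∑ J, H J ≤ C * l ^ n ∧ ∀ J y, ‖y‖ ≤ K / l →
          |iteratedFDeriv ℝ n (normalProbMixture π α β) (w + y) fun i => Pi.single (J i) 1|
            ≤ H J := by
  obtain ⟨A, hA, hprod⟩ := exists_abs_prod_iteratedDeriv_shiftedNormalProb_le.{u₁} hK n
  refine ⟨A ^ n * (n.factorial * Real.exp (n + 2)),
    fun ι _ _ Ω _ π _ l hl hcard α β hα hβ hαβ w => ?_⟩
  have : 0 < l := by linarith
  set δ := Real.exp (-l ^ 2)
  let r (θ : Ω) (j : ι) : ℝ := exitProb (K / l) (α θ j) (β θ j) (w j)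
  have hr (θ j) : 0 ≤ r θ j := exitProb_nonneg ..
  have hr_meas (j) : Measurable fun θ => r θ j :=
    measurable_exitProb (by fun_prop) (by fun_prop) _ _
  let h (J : Fin n → ι) (θ : Ω) : ℝ :=
    Real.exp (-∑ j, r θ j) * ∏ j ∈ Finset.univ.image J, (r θ j + 2 * δ)
  have hh_nonneg (J θ) : 0 ≤ h J θ :=
    mul_nonneg (Real.exp_pos _).le
      (Finset.prod_nonneg fun j _ => add_nonneg (hr θ j) (by positivity))
  have hh_sum (θ) : ∑ J, h J θ ≤ n.factorial * Real.exp (n + 2) :=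
    sum_exp_neg_mul_prod_image_le (hr θ) (by positivity) hcard n
  have hh_int (J) : Integrable (h J) π :=
    integrable_of_sum_le (fun J => by fun_prop) hh_nonneg hh_sum J
  refine ⟨fun J => ∫ θ, (A * l) ^ n * h J θ ∂π, ?_, fun J y hy => ?_⟩
  · calc ∑ J, ∫ θ, (A * l) ^ n * h J θ ∂π = (A * l) ^ n * ∑ J, ∫ θ, h J θ ∂π := by
          simp only [integral_const_mul, ← Finset.mul_sum]
      _ ≤ (A * l) ^ n * (n.factorial * Real.exp (n + 2)) := by
          gcongr
          exact sum_integral_le_of_sum_le (fun J => by fun_prop) hh_nonneg hh_sum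
      _ = _ := by ring
  · rw [iteratedFDeriv_normalProbMixture_apply_single hα hβ, ← Real.norm_eq_abs]
    exact norm_integral_le_of_norm_le ((hh_int J).const_mul _)
      (.of_forall fun θ => hprod ι l hl _ _ w y (hαβ θ) hy J)
end Majorant

theorem gaussianReal_real_Icc (a b : ℝ) :
    (gaussianReal 0 1).real (Set.Icc a b) = shiftedNormalProb a (max a b) 0 := by
  have := nullSingletonClass_gaussianReal (μ := 0) one_ne_zero
  rw [shiftedNormalProb, sub_zero, sub_zero]
  rcases le_total a b with h | h
  · rw [max_eq_right h, measureReal_congr Ioc_ae_eq_Icc.symm, ← Set.Iic_inter_Ioi, ← Set.compl_Iic,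
      ← Set.sdiff_eq, measureReal_sdiff (Set.Iic_subset_Iic.2 h) measurableSet_Iic]
    simp only [stdNormalCDF, cdf_eq_real]
  · rw [max_eq_left h, sub_self, measureReal_congr Ico_ae_eq_Icc.symm, Set.Ico_eq_empty h.not_gt,
      measureReal_empty]

theorem gaussianReal_real_setOf_add_mul_mem_Icc {s : ℝ} (hs : 0 < s) (a b x : ℝ) :
    (gaussianReal 0 1).real {t | x + s * t ∈ Set.Icc a b} =
      shiftedNormalProb (s⁻¹ * a) (s⁻¹ * max a b) (s⁻¹ * x) := by
  have hset : {t | x + s * t ∈ Set.Icc a b} = Set.Icc (s⁻¹ * (a - x)) (s⁻¹ * (b - x)) := by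
    ext t
    simp only [Set.mem_ofPred_eq, Set.mem_Icc, inv_mul_le_iff₀ hs, le_inv_mul_iff₀ hs,
      sub_le_iff_le_add', le_sub_iff_add_le']
  rw [hset, gaussianReal_real_Icc, ← mul_max_of_nonneg _ _ (inv_pos.2 hs).le, max_sub_sub_right]
  simp only [shiftedNormalProb, mul_sub, sub_zero]

theorem pi_gaussianReal_real_setOf_add_smul_mem_Icc {ι : Type*} [Fintype ι] {s : ℝ} (hs : 0 < s)
    (a b x : ι → ℝ) :
    (Measure.pi fun _ => gaussianReal 0 1).real {z | x + s • z ∈ Set.Icc a b} =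
      ∏ j, shiftedNormalProb (s⁻¹ * a j) (s⁻¹ * max (a j) (b j)) ((s⁻¹ • x) j) := by
  have hset : {z | x + s • z ∈ Set.Icc a b} =
      Set.univ.pi fun j => {t | x j + s * t ∈ Set.Icc (a j) (b j)} := by
    ext z
    simp [Set.mem_pi, Pi.le_def, forall_and]
  rw [hset, measureReal_def, Measure.pi_pi, ENNReal.toReal_prod]
  exact Finset.prod_congr rfl fun j _ => gaussianReal_real_setOf_add_mul_mem_Icc hs _ _ _

theorem integral_measureReal_setOf_swap {X Y : Type*} [MeasurableSpace X] [MeasurableSpace Y]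
    {μ : Measure X} {ν : Measure Y} [IsFiniteMeasure μ] [IsFiniteMeasure ν] {Q : X → Y → Prop}
    (hQ : MeasurableSet {p : X × Y | Q p.1 p.2}) :
    ∫ x, ν.real {y | Q x y} ∂μ = ∫ y, μ.real {x | Q x y} ∂ν := by
  have hX (x) : MeasurableSet {y | Q x y} := hQ.preimage measurable_prodMk_left
  have hY (y) : MeasurableSet {x | Q x y} := hQ.preimage measurable_prodMk_right
  simp only [← integral_indicator_one (hX _), ← integral_indicator_one (hY _)]
  exact integral_integral_swap ((integrable_const 1).indicator hQ)

instance isProbabilityMeasure_restrict_Icc_zero_one :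
    IsProbabilityMeasure (volume.restrict (Set.Icc (0 : ℝ) 1)) :=
  ⟨by simp⟩

theorem gphi_eq_volume_real {φ : ℝ} (hφ : 0 < φ) (t : ℝ) :
    gphi φ t = (volume.restrict (Set.Icc (0 : ℝ) 1)).real (Set.Ici (φ * t)) := by
  rw [measureReal_restrict_apply measurableSet_Ici, ← Set.Ici_inter_Iic, ← Set.inter_assoc,
    Set.Ici_inter_Ici, Set.Ici_inter_Iic, Real.volume_real_Icc, gphi]
  split_ifs with hle hlt
  · rw [sup_eq_right.2 (mul_nonpos_of_nonneg_of_nonpos hφ.le hle)]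
    norm_num
  all_goals rw [sup_eq_left.2 (mul_pos hφ (not_le.1 hle)).le]
  · rw [max_eq_left (sub_nonneg.2 ((lt_div_iff₀' hφ).1 hlt).le)]
  · rw [max_eq_right (sub_nonpos.2 ((div_le_iff₀' hφ).1 (not_lt.1 hlt)))]

theorem integrable_prod_shiftedNormalProb {ι Ω : Type*} [Fintype ι] [MeasurableSpace Ω]
    {π : Measure Ω} [IsFiniteMeasure π] {α β : Ω → ι → ℝ} (hα : Measurable α) (hβ : Measurable β)
    (w : ι → ℝ) : Integrable (fun θ => ∏ j, shiftedNormalProb (α θ j) (β θ j) (w j)) π := by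
  have hmeas (j) : Measurable fun θ => shiftedNormalProb (α θ j) (β θ j) (w j) :=
    measurable_iteratedDeriv_shiftedNormalProb (by fun_prop) (by fun_prop) 0 _
  refine .of_bound (Finset.measurable_prod _ fun j _ => hmeas j).aestronglyMeasurable 1
    (.of_forall fun θ => ?_)
  rw [norm_prod]
  exact Finset.prod_le_one (fun _ _ => norm_nonneg _) fun j _ => abs_shiftedNormalProb_le_one _ _ _

section Mrect
variable {d : ℕ} {φ : ℝ}

theorem measurable_mrect (a b : Fin d → ℝ) (φ : ℝ) : Measurable (mrect d a b φ) := by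
  have hgphi : Measurable (gphi φ) :=
    .ite measurableSet_Iic measurable_const
      (.ite measurableSet_Iio (by fun_prop) measurable_const)
  exact hgphi.comp (.iSup fun j => by fun_prop)

theorem mrect_add (a b w z : Fin d → ℝ) (φ : ℝ) :
    mrect d a b φ (w + z) = mrect d (a - z) (b - z) φ w := by
  simp only [mrect, Pi.add_apply, Pi.sub_apply]
  congr! 4 <;> ring

theorem mrect_eq_volume_real (hd : 0 < d) (hφ : 0 < φ) (a b x : Fin d → ℝ) :
    mrect d a b φ x = (volume.restrict (Set.Icc (0 : ℝ) 1)).real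
      {u | x ∈ Set.Icc (fun j => a j - u / φ) fun j => b j + u / φ} := by
  have : Nonempty (Fin d) := ⟨⟨0, hd⟩⟩
  rw [mrect, gphi_eq_volume_real hφ]
  congr 1
  ext u
  simp only [Set.mem_Ici, Set.mem_ofPred_eq, Set.mem_Icc, Pi.le_def, ← forall_and,
    ← le_div_iff₀' hφ, ciSup_le_iff (Set.finite_range _).bddAbove, max_le_iff]
  refine forall_congr' fun j => ⟨fun h => ?_, fun h => ?_⟩ <;> constructor <;>
    linarith [h.1, h.2]

theorem norm_mrect_le_one (hd : 0 < d) (hφ : 0 < φ) (a b x : Fin d → ℝ) :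
    ‖mrect d a b φ x‖ ≤ 1 := by
  rw [mrect_eq_volume_real hd hφ, Real.norm_of_nonneg measureReal_nonneg]
  exact measureReal_le_one

theorem integral_mrect_add_smul (hd : 0 < d) (hφ : 0 < φ) {s : ℝ} (hs : 0 < s)
    (a b w : Fin d → ℝ) :
    ∫ z, mrect d a b φ (w + s • z) ∂Measure.pi (fun _ => gaussianReal 0 1) =
      ∫ u in Set.Icc (0 : ℝ) 1, ∏ j, shiftedNormalProb (s⁻¹ * (a j - u / φ))
        (s⁻¹ * max (a j - u / φ) (b j + u / φ)) ((s⁻¹ • w) j) := by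
  simp only [mrect_eq_volume_real hd hφ, ← pi_gaussianReal_real_setOf_add_smul_mem_Icc hs]
  refine integral_measureReal_setOf_swap ?_
  simp only [Set.mem_Icc, Pi.le_def, Set.ofPred_and, Set.ofPred_forall]
  refine .inter (.iInter fun j => measurableSet_le ?_ ?_)
    (.iInter fun j => measurableSet_le ?_ ?_) <;> fun_prop

theorem rhoFn_map_smul_conv (hd : 0 < d) (hφ : 0 < φ) {ε σ : ℝ} (hε : 0 < ε) (hσ : 0 < σ)
    (a b w : Fin d → ℝ) (ν : Measure (Fin d → ℝ)) [IsFiniteMeasure ν] :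
    rhoFn d a b φ ε ((Measure.pi fun _ => gaussianReal 0 1).map (fun z => σ • z) ∗ ν) w =
      ∫ z, (∫ u in Set.Icc (0 : ℝ) 1, ∏ j,
        shiftedNormalProb ((ε * σ)⁻¹ * (a j - ε * z j - u / φ))
          ((ε * σ)⁻¹ * max (a j - ε * z j - u / φ) (b j - ε * z j + u / φ))
          (((ε * σ)⁻¹ • w) j)) ∂ν := by
  have hmeas : Measurable fun z => mrect d a b φ (w + ε • z) :=
    (measurable_mrect a b φ).comp (by fun_prop)
  have : IsProbabilityMeasure
      ((Measure.pi fun _ : Fin d => gaussianReal 0 1).map fun z => σ • z) :=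
    Measure.isProbabilityMeasure_map (by fun_prop)
  rw [rhoFn, Measure.conv_comm, integral_conv]
  · congr! 2 with z
    rw [integral_map (f := fun y => mrect d a b φ (w + ε • (z + y))) (by fun_prop)
      (hmeas.comp (measurable_const_add z)).aestronglyMeasurable]
    have hshift (n : Fin d → ℝ) : mrect d a b φ (w + ε • (z + σ • n)) =
        mrect d (a - ε • z) (b - ε • z) φ (w + (ε * σ) • n) := by
      rw [← mrect_add, smul_add, smul_smul, add_assoc, add_comm (ε • z)]
    simp only [hshift]
    exact integral_mrect_add_smul hd hφ (by positivity) _ _ w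
  · exact .of_bound hmeas.aestronglyMeasurable 1 (.of_forall fun _ => norm_mrect_le_one hd hφ _ _ _)

theorem exists_rhoFn_eq_normalProbMixture (hd : 0 < d) (hφ : 0 < φ) {ε σ : ℝ} (hε : 0 < ε)
    (hσ : 0 < σ) {γ : Measure (Fin d → ℝ)} [IsGaussian γ]
    (hvar : ∀ x : Fin d → ℝ, σ ^ 2 * ∑ j, x j ^ 2 ≤ Var[fun z => x ⬝ᵥ z; γ])
    (a b : Fin d → ℝ) :
    ∃ (π : Measure ((Fin d → ℝ) × ℝ)) (α β : (Fin d → ℝ) × ℝ → Fin d → ℝ),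
      IsProbabilityMeasure π ∧ Measurable α ∧ Measurable β ∧ (∀ θ j, α θ j ≤ β θ j) ∧
      rhoFn d a b φ ε γ = fun w => normalProbMixture π α β ((ε * σ)⁻¹ • w) := by
  obtain ⟨ν, hν, rfl⟩ := exists_eq_map_smul_pi_gaussianReal_conv hvar
  let α (θ : (Fin d → ℝ) × ℝ) (j : Fin d) : ℝ := (ε * σ)⁻¹ * (a j - ε * θ.1 j - θ.2 / φ)
  let β (θ : (Fin d → ℝ) × ℝ) (j : Fin d) : ℝ :=
    (ε * σ)⁻¹ * max (a j - ε * θ.1 j - θ.2 / φ) (b j - ε * θ.1 j + θ.2 / φ)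
  have hα : Measurable α := by fun_prop
  have hβ : Measurable β := by fun_prop
  refine ⟨ν.prod (volume.restrict (Set.Icc 0 1)), α, β, inferInstance, hα, hβ,
    fun θ j => mul_le_mul_of_nonneg_left (le_max_left _ _) (by positivity), ?_⟩
  ext w
  rw [rhoFn_map_smul_conv hd hφ hε hσ, normalProbMixture,
    integral_prod _ (integrable_prod_shiftedNormalProb hα hβ _)]
end Mrect

theorem one_le_sqrt_log {d : ℕ} (hd : 3 ≤ d) : 1 ≤ √(Real.log d) := by
  have hd' : (3 : ℝ) ≤ d := by exact_mod_cast hd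
  rw [Real.one_le_sqrt, Real.le_log_iff_exp_le (by linarith)]
  linarith [Real.exp_one_lt_three]

theorem natCast_mul_exp_neg_sqrt_log_sq {d : ℕ} (hd : 3 ≤ d) :
    d * Real.exp (-√(Real.log d) ^ 2) = 1 := by
  have hd' : (3 : ℝ) ≤ d := by exact_mod_cast hd
  rw [Real.sq_sqrt (Real.log_nonneg (by linarith)), Real.exp_neg, Real.exp_log (by linarith),
    mul_inv_cancel₀ (by linarith)]

theorem stmt15_general (v : ℕ) {K : ℝ} (hK : 0 ≤ K) :
    ∃ C : ℝ, ∀ d : ℕ, 3 ≤ d → ∀ (γ : Measure (Fin d → ℝ)) [IsGaussian γ], ∀ σ : ℝ, 0 < σ →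
      (∀ x : Fin d → ℝ, σ ^ 2 * ∑ j, x j ^ 2 ≤ Var[fun z => x ⬝ᵥ z; γ]) →
      ∀ φ : ℝ, 0 < φ → ∀ ε : ℝ, 0 < ε → ∀ a b w : Fin d → ℝ,
        ∑ J : Fin v → Fin d,
          (⨆ y : {y : Fin d → ℝ // ‖y‖ ≤ ε * σ * (K / √(Real.log d))},
            |iteratedFDeriv ℝ v (rhoFn d a b φ ε γ) (w + y.1) fun i => Pi.single (J i) 1|)
          ≤ C * Real.log d ^ ((v : ℝ) / 2) / (ε * σ) ^ v := by
  obtain ⟨C, hC⟩ := exists_majorant_iteratedFDeriv_normalProbMixture.{0, 0} hK v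
  refine ⟨C, fun d hd γ _ σ hσ hvar φ hφ ε hε a b w => ?_⟩
  obtain ⟨π, α, β, hπ, hα, hβ, hαβ, hrho⟩ :=
    exists_rhoFn_eq_normalProbMixture (by omega) hφ hε hσ hvar a b
  obtain ⟨H, hH_sum, hH⟩ := hC (Fin d) _ π _ (one_le_sqrt_log hd)
    (by rw [Fintype.card_fin, natCast_mul_exp_neg_sqrt_log_sq hd]) α β hα hβ hαβ ((ε * σ)⁻¹ • w)
  have hs : 0 < ε * σ := mul_pos hε hσ
  have hterm (J : Fin v → Fin d) (y : Fin d → ℝ) (hy : ‖y‖ ≤ ε * σ * (K / √(Real.log d))) :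
      |iteratedFDeriv ℝ v (rhoFn d a b φ ε γ) (w + y) fun i => Pi.single (J i) 1| ≤
        ((ε * σ) ^ v)⁻¹ * H J := by
    rw [hrho, iteratedFDeriv_comp_const_smul _ (contDiff_normalProbMixture hα hβ v), smul_apply,
      smul_eq_mul, abs_mul, abs_of_pos (by positivity), inv_pow, smul_add]
    gcongr
    refine hH J _ ?_
    rw [norm_smul, Real.norm_of_nonneg (by positivity)]
    exact (inv_mul_le_iff₀ hs).2 hy
  calc _ ≤ ∑ J, ((ε * σ) ^ v)⁻¹ * H J := Finset.sum_le_sum fun J _ =>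
        Real.iSup_le (fun y => hterm J y.1 y.2)
          ((abs_nonneg _).trans (hterm J 0 (by rw [norm_zero]; positivity)))
    _ = (∑ J, H J) / (ε * σ) ^ v := by rw [← Finset.mul_sum, inv_mul_eq_div]
    _ ≤ _ := by
        rw [Real.rpow_div_two_eq_sqrt _ (Real.log_natCast_nonneg d), Real.rpow_natCast]
        gcongr

/-- for every v ≥ 1 and K > 0 there is a constant C = C(v,K) such that
for all d ≥ 3, Σ positive definite with unit diagonal and smallest eigenvalue σ_*²,
φ > 0, ε ∈ (0,1], rectangles A and all w,
Σ_{j_1…j_v} sup_{‖y‖_∞ ≤ εσ_*η} |∂_{j_1…j_v} ρ^{A,φ,ε,Σ}(w+y)|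
  ≤ C (log d)^{v/2}/(εσ_*)^v, where η = K/√(log d). -/
theorem stmt15 (v : ℕ) (hv : 1 ≤ v) (K : ℝ) (hK : 0 < K) :
    ∃ C : ℝ, ∀ d : ℕ, 3 ≤ d →
      ∀ (S : Fin d → Fin d → ℝ), (∀ j, S j j = 1) →
      ∀ σs : ℝ, 0 < σs →
      IsGLB {r : ℝ | ∃ x : Fin d → ℝ, (∑ j, (x j) ^ 2) = 1 ∧
        r = ∑ j, ∑ k, x j * S j k * x k} (σs ^ 2) →
      ∀ γ : Measure (Fin d → ℝ), IsProbabilityMeasure γ →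
      (∀ l : (Fin d → ℝ) →ₗ[ℝ] ℝ, ∃ vr : NNReal, γ.map l = gaussianReal 0 vr) →
      (∀ j k, ∫ z, z j * z k ∂γ = S j k) →
      ∀ φ : ℝ, 0 < φ → ∀ ε : ℝ, 0 < ε → ε ≤ 1 →
      ∀ a b : Fin d → ℝ, ∀ w : Fin d → ℝ,
        ∑ J : Fin v → Fin d,
          (⨆ y : {y : Fin d → ℝ // ‖y‖ ≤ ε * σs * (K / Real.sqrt (Real.log d))},
            |iteratedFDeriv ℝ v (rhoFn d a b φ ε γ) (w + y.1)
              (fun i => Pi.single (J i) 1)|)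
          ≤ C * Real.log d ^ ((v : ℝ) / 2) / (ε * σs) ^ v := by
  obtain ⟨C, hC⟩ := stmt15_general v hK.le
  refine ⟨C, fun d hd S _ σs hσs hGLB γ _ hγ hS φ hφ ε hε _ a b w => ?_⟩
  have := isGaussian_of_map_eq_gaussianReal_zero hγ
  refine hC d hd γ σs hσs (fun x => ?_) φ hφ ε hε a b w
  rw [variance_dotProduct (integral_eval_eq_zero hγ) hS]
  exact mul_sum_sq_le_of_mem_lowerBounds hGLB.1 x
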